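/- For any Borel probability measures μ, ν, ν' on X, any p ≥ 1, k ≥ 0 and δ ∈ (0, 1), let ν̃ = (1−δ)ν + δν'. Then RPW_{p,k}(μ, ν) − δ ≤ RPW_{p,k}(μ, ν̃) ≤ (1−δ)·RPW_{p,k}(μ, ν) + δ. -/

import Mathlib

open MeasureTheory

noncomputable section

/-- `γ` is an `α`-partial transport plan from `μ` to `ν`: a Borel measure on `X × X` of
total mass `α` whose first marginal is dominated by `μ` and second marginal by `ν`. -/
def IsPartialPlan {X : Type*} [MeasurableSpace X] (μ ν : Measure X) (α : ℝ)
    (γ : Measure (X × X)) : Prop :=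
  γ Set.univ = ENNReal.ofReal α ∧ γ.map Prod.fst ≤ μ ∧ γ.map Prod.snd ≤ ν

/-- The cost `w_p(γ) = (∫ c(x,y)^p dγ)^(1/p)` of a transport plan. -/
def planCost {X : Type*} [MetricSpace X] [MeasurableSpace X] (p : ℝ)
    (γ : Measure (X × X)) : ℝ :=
  (∫ z, dist z.1 z.2 ^ p ∂γ) ^ (1 / p)

/-- The `α`-partial `p`-Wasserstein distance `W_{p,α}(μ, ν)`. -/
def partialW {X : Type*} [MetricSpace X] [MeasurableSpace X] (p α : ℝ)
    (μ ν : Measure X) : ℝ :=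
  sInf { c : ℝ | ∃ γ : Measure (X × X), IsPartialPlan μ ν α γ ∧ c = planCost p γ }

/-- The `(p,k)`-RPW distance: the least `ε ∈ [0,1]` with `W_{p,1-ε}(μ,ν) ≤ kε`. -/
def RPW {X : Type*} [MetricSpace X] [MeasurableSpace X] (p k : ℝ)
    (μ ν : Measure X) : ℝ :=
  sInf { ε : ℝ | ε ∈ Set.Icc (0:ℝ) 1 ∧ partialW p (1 - ε) μ ν ≤ k * ε }

/-!
Both estimates modify plans without raising their cost, by passing to a smaller measure.

A plan from `μ` to `ν`, scaled by `1 - δ`, is a plan from `μ` to any measure dominating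
`(1 - δ)ν`; a defect `ε` becomes `1 - (1 - δ)(1 - ε) = (1 - δ)ε + δ`. Conversely, if
`ν̃ ≤ ν + σ` with `σ` of mass at most `δ`, then the second marginal of a plan from `μ` to `ν̃`,
minus `σ`, is dominated by `ν` and has lost mass at most `δ`. A density lifts this smaller marginal
to a smaller plan, so a defect `ε` becomes at most `ε + δ`.
-/

section Submeasure

variable {Y Z : Type*} [MeasurableSpace Y] [MeasurableSpace Z]

theorem smul_measure_le_self (m : Measure Y) {c : ENNReal} (hc : c ≤ 1) : c • m ≤ m :=
  calc c • m ≤ (1 : ENNReal) • m := by gcongr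
    _ = m := one_smul _ m

theorem exists_le_measure_univ_eq (m : Measure Y) [IsFiniteMeasure m] {a : ENNReal}
    (ha : a ≤ m Set.univ) : ∃ m' ≤ m, m' Set.univ = a := by
  refine ⟨(a / m Set.univ) • m,
    smul_measure_le_self m (ENNReal.div_le_of_le_mul (by rwa [one_mul])), ?_⟩
  exact ENNReal.div_mul_cancel' (fun h ↦ nonpos_iff_eq_zero.mp (ha.trans_eq h))
    (fun h ↦ absurd h (measure_ne_top m _))

theorem exists_le_map_eq_of_le_map (m : Measure Y) {f : Y → Z} (hf : Measurable f)
    [SigmaFinite (m.map f)] {η : Measure Z} (hη : η ≤ m.map f) : ∃ m' ≤ m, m'.map f = η := by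
  have : SigmaFinite η := Measure.sigmaFinite_of_le _ hη
  have hg : Measurable (η.rnDeriv (m.map f)) := Measure.measurable_rnDeriv _ _
  refine ⟨m.withDensity (η.rnDeriv (m.map f) ∘ f), ?_, ?_⟩
  · calc m.withDensity (η.rnDeriv (m.map f) ∘ f)
        ≤ m.withDensity 1 :=
          withDensity_mono (ae_of_ae_map hf.aemeasurable (Measure.rnDeriv_le_one_of_le hη))
      _ = m := withDensity_one
  · calc (m.withDensity (η.rnDeriv (m.map f) ∘ f)).map f
        = (m.map f).withDensity (η.rnDeriv (m.map f)) := by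
          ext s hs
          rw [Measure.map_apply hf hs, withDensity_apply _ (hf hs), withDensity_apply _ hs,
            setLIntegral_map hs hg hf]
          rfl
      _ = η := Measure.withDensity_rnDeriv_eq _ _ (Measure.absolutelyContinuous_of_le hη)

end Submeasure

namespace IsPartialPlan

variable {X : Type*} [MeasurableSpace X] {μ ν ν' σ : Measure X} {α δ t : ℝ} {γ : Measure (X × X)}

theorem isFiniteMeasure (hγ : IsPartialPlan μ ν α γ) : IsFiniteMeasure γ :=
  ⟨hγ.1 ▸ ENNReal.ofReal_lt_top⟩

theorem zero (μ ν : Measure X) : IsPartialPlan μ ν 0 0 :=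
  ⟨by simp, by simpa using Measure.zero_le μ, by simpa using Measure.zero_le ν⟩

theorem prod (μ ν : Measure X) [IsProbabilityMeasure μ] [IsProbabilityMeasure ν] :
    IsPartialPlan μ ν 1 (μ.prod ν) :=
  ⟨by simp, by simp [Measure.map_fst_prod], by simp [Measure.map_snd_prod]⟩

theorem smul (hγ : IsPartialPlan μ ν α γ) (ht₀ : 0 ≤ t) (ht₁ : t ≤ 1)
    (hν : ENNReal.ofReal t • ν ≤ ν') : IsPartialPlan μ ν' (t * α) (ENNReal.ofReal t • γ) := by
  refine ⟨?_, ?_, ?_⟩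
  · rw [Measure.smul_apply, hγ.1, smul_eq_mul, ← ENNReal.ofReal_mul ht₀]
  · rw [Measure.map_smul]
    exact (smul_measure_le_self _ (ENNReal.ofReal_le_one.mpr ht₁)).trans hγ.2.1
  · rw [Measure.map_smul]
    exact (smul_le_smul_left _ hγ.2.2).trans hν

theorem exists_le_sub (hγ : IsPartialPlan μ ν' α γ) (hδ : 0 ≤ δ) (hν : ν' ≤ ν + σ)
    (hσ : σ Set.univ ≤ ENNReal.ofReal δ) : ∃ γ' ≤ γ, IsPartialPlan μ ν (α - δ) γ' := by
  have : IsFiniteMeasure γ := hγ.isFiniteMeasure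
  have : IsFiniteMeasure σ := ⟨hσ.trans_lt ENNReal.ofReal_lt_top⟩
  obtain ⟨γ₁, hγ₁, hsnd⟩ :=
    exists_le_map_eq_of_le_map γ measurable_snd (Measure.sub_le (μ := γ.map Prod.snd) (ν := σ))
  have : IsFiniteMeasure γ₁ := isFiniteMeasure_of_le γ hγ₁
  have hmass : ENNReal.ofReal (α - δ) ≤ γ₁ Set.univ := by
    rw [ENNReal.ofReal_sub _ hδ, tsub_le_iff_right]
    calc ENNReal.ofReal α
        = γ.map Prod.snd Set.univ := by
          rw [Measure.map_apply measurable_snd .univ, Set.preimage_univ, hγ.1]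
      _ ≤ (γ.map Prod.snd - σ + σ) Set.univ := Measure.sub_le_iff_le_add.mp le_rfl _
      _ = γ₁ Set.univ + σ Set.univ := by
          rw [← hsnd, Measure.add_apply, Measure.map_apply measurable_snd .univ,
            Set.preimage_univ]
      _ ≤ γ₁ Set.univ + ENNReal.ofReal δ := by gcongr
  obtain ⟨γ', hγ', huniv⟩ := exists_le_measure_univ_eq γ₁ hmass
  refine ⟨γ', hγ'.trans hγ₁, huniv, ?_, ?_⟩
  · exact (Measure.map_mono (hγ'.trans hγ₁) measurable_fst).trans hγ.2.1
  · calc γ'.map Prod.snd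
        ≤ γ₁.map Prod.snd := Measure.map_mono hγ' measurable_snd
      _ = γ.map Prod.snd - σ := hsnd
      _ ≤ ν := Measure.sub_le_of_le_add (hγ.2.2.trans hν)

end IsPartialPlan

theorem exists_isPartialPlan {X : Type*} [MeasurableSpace X] (μ ν : Measure X)
    [IsProbabilityMeasure μ] [IsProbabilityMeasure ν] {α : ℝ} (hα : α ≤ 1) :
    ∃ γ, IsPartialPlan μ ν α γ := by
  obtain ⟨γ, -, hγ⟩ := (IsPartialPlan.prod μ ν).exists_le_sub (σ := 0) (sub_nonneg.mpr hα)
    (Measure.le_add_right le_rfl) (by simp)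
  exact ⟨γ, by rwa [sub_sub_cancel] at hγ⟩

section Basic

variable {X : Type*} [MetricSpace X] [MeasurableSpace X] {μ ν : Measure X} {p k α : ℝ}
  {γ γ' : Measure (X × X)}

theorem planCost_nonneg (p : ℝ) (γ : Measure (X × X)) : 0 ≤ planCost p γ :=
  Real.rpow_nonneg (integral_nonneg fun _ ↦ Real.rpow_nonneg dist_nonneg _) _

theorem planCost_zero_measure (hp : p ≠ 0) : planCost p (0 : Measure (X × X)) = 0 := by
  simp [planCost, hp]

theorem planCost_mono (hp : 0 ≤ p) (hint : Integrable (fun z : X × X ↦ dist z.1 z.2 ^ p) γ)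
    (h : γ' ≤ γ) : planCost p γ' ≤ planCost p γ := by
  have hnonneg (z : X × X) : 0 ≤ dist z.1 z.2 ^ p := Real.rpow_nonneg dist_nonneg p
  exact Real.rpow_le_rpow (integral_nonneg hnonneg)
    (integral_mono_measure h (.of_forall hnonneg) hint) (one_div_nonneg.mpr hp)

theorem partialW_le_planCost (hγ : IsPartialPlan μ ν α γ) : partialW p α μ ν ≤ planCost p γ :=
  csInf_le ⟨0, by rintro _ ⟨γ, -, rfl⟩; exact planCost_nonneg p γ⟩ ⟨γ, hγ, rfl⟩

theorem one_mem_setOf_partialW_le (hp : p ≠ 0) (hk : 0 ≤ k) :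
    1 ∈ {ε : ℝ | ε ∈ Set.Icc (0 : ℝ) 1 ∧ partialW p (1 - ε) μ ν ≤ k * ε} := by
  refine ⟨by simp, ?_⟩
  calc partialW p (1 - 1) μ ν
      ≤ planCost p 0 := partialW_le_planCost (by simpa using IsPartialPlan.zero μ ν)
    _ = 0 := planCost_zero_measure hp
    _ ≤ k * 1 := by simpa using hk

theorem RPW_le {ε : ℝ} (hp : p ≠ 0) (hk : 0 ≤ k) (hε : 0 ≤ ε)
    (h : partialW p (1 - ε) μ ν ≤ k * ε) : RPW p k μ ν ≤ ε := by
  have hbdd : BddBelow {ε : ℝ | ε ∈ Set.Icc (0 : ℝ) 1 ∧ partialW p (1 - ε) μ ν ≤ k * ε} :=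
    ⟨0, fun _ h ↦ h.1.1⟩
  rcases le_total ε 1 with hε₁ | hε₁
  · exact csInf_le hbdd ⟨⟨hε, hε₁⟩, h⟩
  · exact (csInf_le hbdd (one_mem_setOf_partialW_le hp hk)).trans hε₁

theorem le_RPW {a : ℝ} (hp : p ≠ 0) (hk : 0 ≤ k)
    (h : ∀ ε ∈ Set.Icc (0 : ℝ) 1, partialW p (1 - ε) μ ν ≤ k * ε → a ≤ ε) : a ≤ RPW p k μ ν :=
  le_csInf ⟨1, one_mem_setOf_partialW_le hp hk⟩ fun ε hε ↦ h ε hε.1 hε.2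

end Basic

section Bounded

variable {X : Type*} [MetricSpace X] [BoundedSpace X] [SecondCountableTopology X]
  [MeasurableSpace X] [OpensMeasurableSpace X] {μ ν ν' σ : Measure X}
  {p k α β δ t : ℝ}

theorem integrable_dist_rpow (hp : 0 ≤ p) (γ : Measure (X × X)) [IsFiniteMeasure γ] :
    Integrable (fun z ↦ dist z.1 z.2 ^ p) γ := by
  have hmeas : Measurable fun z : X × X ↦ dist z.1 z.2 ^ p := by fun_prop
  refine .of_bound hmeas.aestronglyMeasurable (Metric.diam (Set.univ : Set X) ^ p)
    (.of_forall fun z ↦ ?_)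
  rw [Real.norm_of_nonneg (Real.rpow_nonneg dist_nonneg p)]
  exact Real.rpow_le_rpow dist_nonneg
    (Metric.dist_le_diam_of_mem (Bornology.IsBounded.all _) (Set.mem_univ _) (Set.mem_univ _)) hp

theorem partialW_le_partialW {μ' : Measure X} (hp : 0 ≤ p) (hne : ∃ γ, IsPartialPlan μ ν α γ)
    (h : ∀ γ, IsPartialPlan μ ν α γ → ∃ γ' ≤ γ, IsPartialPlan μ' ν' β γ') :
    partialW p β μ' ν' ≤ partialW p α μ ν := by
  obtain ⟨γ₀, hγ₀⟩ := hne
  refine le_csInf ⟨_, γ₀, hγ₀, rfl⟩ ?_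
  rintro _ ⟨γ, hγ, rfl⟩
  obtain ⟨γ', hle, hγ'⟩ := h γ hγ
  have := hγ.isFiniteMeasure
  exact (partialW_le_planCost hγ').trans (planCost_mono hp (integrable_dist_rpow hp γ) hle)

variable [IsProbabilityMeasure μ]

theorem partialW_sub_le [IsProbabilityMeasure ν'] (hp : 0 ≤ p) (hα : α ≤ 1) (hδ : 0 ≤ δ)
    (hν : ν' ≤ ν + σ) (hσ : σ Set.univ ≤ ENNReal.ofReal δ) :
    partialW p (α - δ) μ ν ≤ partialW p α μ ν' :=
  partialW_le_partialW hp (exists_isPartialPlan μ ν' hα) fun _ hγ ↦ hγ.exists_le_sub hδ hν hσ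

theorem partialW_mul_le [IsProbabilityMeasure ν] (hp : 0 ≤ p) (hα : α ≤ 1) (ht₀ : 0 ≤ t)
    (ht₁ : t ≤ 1) (hν : ENNReal.ofReal t • ν ≤ ν') :
    partialW p (t * α) μ ν' ≤ partialW p α μ ν :=
  partialW_le_partialW hp (exists_isPartialPlan μ ν hα) fun γ hγ ↦
    ⟨ENNReal.ofReal t • γ,
      smul_measure_le_self γ (ENNReal.ofReal_le_one.mpr ht₁),
      hγ.smul ht₀ ht₁ hν⟩

theorem RPW_le_RPW_add [IsProbabilityMeasure ν'] (hp : 0 < p) (hk : 0 ≤ k) (hδ : 0 ≤ δ)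
    (hν : ν' ≤ ν + σ) (hσ : σ Set.univ ≤ ENNReal.ofReal δ) :
    RPW p k μ ν ≤ RPW p k μ ν' + δ := by
  rw [← sub_le_iff_le_add]
  refine le_RPW hp.ne' hk fun ε ⟨hε₀, _⟩ hε ↦ ?_
  rw [sub_le_iff_le_add]
  refine RPW_le hp.ne' hk (add_nonneg hε₀ hδ) ?_
  calc partialW p (1 - (ε + δ)) μ ν
      = partialW p (1 - ε - δ) μ ν := by rw [sub_sub]
    _ ≤ partialW p (1 - ε) μ ν' := partialW_sub_le hp.le (sub_le_self 1 hε₀) hδ hν hσ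
    _ ≤ k * ε := hε
    _ ≤ k * (ε + δ) := by gcongr; exact le_add_of_nonneg_right hδ

theorem RPW_le_mul_RPW_add [IsProbabilityMeasure ν] (hp : 0 < p) (hk : 0 ≤ k) (ht₀ : 0 < t)
    (ht₁ : t ≤ 1) (hν : ENNReal.ofReal t • ν ≤ ν') :
    RPW p k μ ν' ≤ t * RPW p k μ ν + (1 - t) := by
  rw [← sub_le_iff_le_add, ← div_le_iff₀' ht₀]
  refine le_RPW hp.ne' hk fun ε ⟨hε₀, hε₁⟩ hε ↦ ?_
  rw [div_le_iff₀' ht₀, sub_le_iff_le_add]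
  have hle : ε ≤ t * ε + (1 - t) := by nlinarith
  refine RPW_le hp.ne' hk (hε₀.trans hle) ?_
  calc partialW p (1 - (t * ε + (1 - t))) μ ν'
      = partialW p (t * (1 - ε)) μ ν' := by ring_nf
    _ ≤ partialW p (1 - ε) μ ν := partialW_mul_le hp.le (sub_le_self 1 hε₀) ht₀.le ht₁ hν
    _ ≤ k * ε := hε
    _ ≤ k * (t * ε + (1 - t)) := by gcongr

end Bounded

theorem isProbabilityMeasure_smul_add_smul {Y : Type*} [MeasurableSpace Y] (ν ν' : Measure Y)
    [IsProbabilityMeasure ν] [IsProbabilityMeasure ν'] {δ : ℝ} (hδ : δ ∈ Set.Icc (0 : ℝ) 1) :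
    IsProbabilityMeasure (ENNReal.ofReal (1 - δ) • ν + ENNReal.ofReal δ • ν') :=
  ⟨by simp [← ENNReal.ofReal_add (sub_nonneg.mpr hδ.2) hδ.1]⟩

theorem rpw_outlier_robustness_general
    {X : Type*} [MetricSpace X] [BoundedSpace X] [SecondCountableTopology X]
    [MeasurableSpace X] [OpensMeasurableSpace X]
    (μ ν ν' : Measure X)
    [IsProbabilityMeasure μ] [IsProbabilityMeasure ν] [IsProbabilityMeasure ν']
    (p k : ℝ) (hp : 0 < p) (hk : 0 ≤ k)
    (δ : ℝ) (hδ : δ ∈ Set.Ioo (0 : ℝ) 1) :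
    RPW p k μ ν - δ ≤ RPW p k μ (ENNReal.ofReal (1 - δ) • ν + ENNReal.ofReal δ • ν') ∧
    RPW p k μ (ENNReal.ofReal (1 - δ) • ν + ENNReal.ofReal δ • ν') ≤
      (1 - δ) * RPW p k μ ν + δ := by
  obtain ⟨hδ₀, hδ₁⟩ := hδ
  have := isProbabilityMeasure_smul_add_smul ν ν' ⟨hδ₀.le, hδ₁.le⟩
  have hle : ENNReal.ofReal (1 - δ) • ν ≤ ν :=
    smul_measure_le_self ν (ENNReal.ofReal_le_one.mpr (sub_le_self 1 hδ₀.le))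
  constructor
  · rw [sub_le_iff_le_add]
    exact RPW_le_RPW_add hp hk hδ₀.le (add_le_add_left hle _) (by simp)
  · simpa using RPW_le_mul_RPW_add (μ := μ) hp hk (sub_pos.mpr hδ₁) (sub_le_self 1 hδ₀.le)
      (Measure.le_add_right le_rfl)

/-- For Borel probability measures `μ, ν, ν'`, `p ≥ 1`, `k ≥ 0`, and
`δ ∈ (0,1)`, setting `ν̃ = (1-δ)ν + δν'`, we have
`RPW_{p,k}(μ, ν) − δ ≤ RPW_{p,k}(μ, ν̃) ≤ (1−δ)·RPW_{p,k}(μ, ν) + δ`. -/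
theorem rpw_outlier_robustness
    {X : Type*} [MetricSpace X] [CompactSpace X] [MeasurableSpace X] [BorelSpace X]
    (hdiam : ∀ a b : X, dist a b ≤ 1)
    (μ ν ν' : Measure X)
    [IsProbabilityMeasure μ] [IsProbabilityMeasure ν] [IsProbabilityMeasure ν']
    (p k : ℝ) (hp : 1 ≤ p) (hk : 0 ≤ k)
    (δ : ℝ) (hδ : δ ∈ Set.Ioo (0:ℝ) 1) :
    RPW p k μ ν - δ ≤ RPW p k μ (ENNReal.ofReal (1 - δ) • ν + ENNReal.ofReal δ • ν') ∧
    RPW p k μ (ENNReal.ofReal (1 - δ) • ν + ENNReal.ofReal δ • ν') ≤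
      (1 - δ) * RPW p k μ ν + δ :=
  rpw_outlier_robustness_general μ ν ν' p k (zero_lt_one.trans_le hp) hk δ hδ
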